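/- For every α ∈ (1.58, 1.97), the function κ_α^A(x,y) = k_α^A( (k_α^A)^{-1}(x) ∗ (k_α^A)^{-1}(y) ) is neither convex nor concave in its first argument uniformly over fixed second arguments: it is not the case that for every fixed y ∈ I_α^A the map x ↦ κ_α^A(x,y) is convex on I_α^A, and it is not the case that for every fixed y ∈ I_α^A the map x ↦ κ_α^A(x,y) is concave on I_α^A. -/

import Mathlib

open Real

noncomputable section

/-- Binary convolution `a∗b = a(1-b) + (1-a)b`. -/
def bconv (a b : ℝ) : ℝ := a * (1 - b) + (1 - a) * b

/-- Binary Rényi entropy `h_α(p) = (1/(1-α))·log(p^α + (1-p)^α)`. -/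
def binH (α p : ℝ) : ℝ := (1 / (1 - α)) * Real.log (p ^ α + (1 - p) ^ α)

/-- Inverse of `h_α` as a map `[0, log 2] → [0, 1/2]`. -/
def binHInv (α : ℝ) : ℝ → ℝ := Function.invFunOn (binH α) (Set.Icc 0 (1/2))

/-- `k_α^A(p) = (p^α + (1-p)^α)^{1/α}`. -/
def kA (α p : ℝ) : ℝ := (p ^ α + (1 - p) ^ α) ^ (1/α)

/-- Inverse of `k_α^A`, mapping `I_α^A` back to `[0,1/2]`. -/
def kAInv (α : ℝ) : ℝ → ℝ := Function.invFunOn (kA α) (Set.Icc 0 (1/2))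

/-- `δ_α^A = 2^{(1-α)/α}`. -/
def deltaA (α : ℝ) : ℝ := (2 : ℝ) ^ ((1 - α)/α)

/-- The closed interval `I_α^A` with endpoints `1` and `δ_α^A`. -/
def IA (α : ℝ) : Set ℝ := Set.uIcc 1 (deltaA α)

/-- `κ_α^A(x,y) = k_α^A((k_α^A)⁻¹(x) ∗ (k_α^A)⁻¹(y))`. -/
def kkA (α x y : ℝ) : ℝ := kA α (bconv (kAInv α x) (kAInv α y))

/-- `k_α^H(p) = p^α + (1-p)^α`. -/
def kH (α p : ℝ) : ℝ := p ^ α + (1 - p) ^ α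

/-- Inverse of `k_α^H`, mapping `I_α^H` back to `[0,1/2]`. -/
def kHInv (α : ℝ) : ℝ → ℝ := Function.invFunOn (kH α) (Set.Icc 0 (1/2))

/-- `δ_α^H = 2^{1-α}`. -/
def deltaH (α : ℝ) : ℝ := (2 : ℝ) ^ (1 - α)

/-- The closed interval `I_α^H` with endpoints `1` and `δ_α^H`. -/
def IH (α : ℝ) : Set ℝ := Set.uIcc 1 (deltaH α)

/-- `κ_α^H(x,y) = k_α^H((k_α^H)⁻¹(x) ∗ (k_α^H)⁻¹(y))`. -/
def kkH (α x y : ℝ) : ℝ := kH α (bconv (kHInv α x) (kHInv α y))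

/-- `ĥ_α(x,y) = h_α(h_α⁻¹(x) ∗ h_α⁻¹(y))`. -/
def hhat (α x y : ℝ) : ℝ := binH α (bconv (binHInv α x) (binHInv α y))

/-- Marginal on `Y` of a joint pmf. -/
def margY {X Y : Type*} [Fintype X] (p : X → Y → ℝ) (y : Y) : ℝ := ∑ x, p x y

/-- A joint pmf: nonnegative entries summing to one. -/
def IsPmf {X Y : Type*} [Fintype X] [Fintype Y] (p : X → Y → ℝ) : Prop :=
  (∀ x y, 0 ≤ p x y) ∧ ∑ x, ∑ y, p x y = 1

/-- Arimoto conditional Rényi entropy `H_α^A(X|Y)`. -/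
def condA (α : ℝ) {X Y : Type*} [Fintype X] [Fintype Y] (p : X → Y → ℝ) : ℝ :=
  (α / (1 - α)) * Real.log (∑ y, margY p y * (∑ x, (p x y / margY p y) ^ α) ^ (1/α))

/-- Hayashi conditional Rényi entropy `H_α^H(X|Y)`. -/
def condH (α : ℝ) {X Y : Type*} [Fintype X] [Fintype Y] (p : X → Y → ℝ) : ℝ :=
  (1 / (1 - α)) * Real.log (∑ y, ∑ x, margY p y * (p x y / margY p y) ^ α)

/-- Jizba–Arimitsu conditional Rényi entropy `H_α^J(X|Y)`. -/
def condJ (α : ℝ) {X Y : Type*} [Fintype X] [Fintype Y] (p : X → Y → ℝ) : ℝ :=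
  (1 / (1 - α)) * (Real.log (∑ x, ∑ y, p x y ^ α) - Real.log (∑ y, margY p y ^ α))

/-- Cachin conditional Rényi entropy `H_α^C(X|Y)`. -/
def condC (α : ℝ) {X Y : Type*} [Fintype X] [Fintype Y] (p : X → Y → ℝ) : ℝ :=
  (1 / (1 - α)) * ∑ y, margY p y * Real.log (∑ x, (p x y / margY p y) ^ α)

/-- `K_α^A(X|Y) = exp(((1-α)/α)·H_α^A(X|Y))`. -/
def KA (α : ℝ) {X Y : Type*} [Fintype X] [Fintype Y] (p : X → Y → ℝ) : ℝ :=
  Real.exp (((1 - α)/α) * condA α p)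

/-- `K_α^H(X|Y) = exp((1-α)·H_α^H(X|Y))`. -/
def KH (α : ℝ) {X Y : Type*} [Fintype X] [Fintype Y] (p : X → Y → ℝ) : ℝ :=
  Real.exp ((1 - α) * condH α p)

/-- `K_α^J(X|Y) = exp((1-α)·H_α^J(X|Y))`. -/
def KJ (α : ℝ) {X Y : Type*} [Fintype X] [Fintype Y] (p : X → Y → ℝ) : ℝ :=
  Real.exp ((1 - α) * condJ α p)

/-- Joint pmf of `(X₁+X₂, (Y₁,Y₂))` for independent pairs `(X₁,Y₁)`, `(X₂,Y₂)`. -/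
def combine {Y1 Y2 : Type*} (p1 : Bool → Y1 → ℝ) (p2 : Bool → Y2 → ℝ) :
    Bool → Y1 × Y2 → ℝ :=
  fun z y => ∑ x : Bool, p1 x y.1 * p2 (Bool.xor x z) y.2

/-- `k_∞^A(p) = max{p, 1-p}`. -/
def kInf (p : ℝ) : ℝ := max p (1 - p)

/-- Binary min-entropy `h_∞(p) = -log max{p, 1-p}`. -/
def binHInf (p : ℝ) : ℝ := - Real.log (max p (1 - p))

/-- Inverse of the restriction of `h_∞` to `[0,1/2]`. -/
def binHInfInv : ℝ → ℝ := Function.invFunOn binHInf (Set.Icc 0 (1/2))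

/-- Conditional min-entropy `H_∞(X|Y)` for binary `X`. -/
def condInf {Y : Type*} [Fintype Y] (p : Bool → Y → ℝ) : ℝ :=
  - Real.log (∑ y, margY p y * max (p false y / margY p y) (p true y / margY p y))

/-- Unconditional Rényi entropy of a finitely supported distribution. -/
def renyiEnt (α : ℝ) {X : Type*} [Fintype X] (p : X → ℝ) : ℝ :=
  (1 / (1 - α)) * Real.log (∑ x, p x ^ α)

/-- Distribution of the mod-2 sum of two independent binary random variables. -/
def sumDist (p1 p2 : Bool → ℝ) : Bool → ℝ := fun z => ∑ x : Bool, p1 x * p2 (Bool.xor x z)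

/-!
Write `k` for `k_α^A`. Since `1 - 2 (a ∗ b) = (1 - 2a) (1 - 2b)` and `k` is critical and
nondegenerate at `1/2`, the ratio `(κ(x, y) - δ) / (y - δ)` tends to `(1 - 2 k⁻¹(x))²` as
`y → δ = k(1/2)`. Hence convexity (concavity) of every `κ(·, y)` makes `(1 - 2p)²` a convex
(concave) function of `k(p)`. Comparing chords with the derivative of `k` at `0`, convexity forces
`k(p) ≤ 1 - p + p²`, which fails near `0` for `α < 2` because `k(p) = 1 - p + p^α/α + o(p^α)`.
Comparing chords with the second-order expansion of `k` at `1/2`, concavity forces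
`2^{1/α} (α + 1) ≤ 4`, which fails for `α > 1.58`.
-/

section

open Set Filter Topology

theorem tendsto_sub_div_sq_of_hasDerivAt {f f' : ℝ → ℝ} {x c : ℝ}
    (hf : ∀ᶠ y in 𝓝 x, HasDerivAt f (f' y) y) (hf' : HasDerivAt f' c x) (hx : f' x = 0) :
    Tendsto (fun y ↦ (f y - f x) / (y - x) ^ 2) (𝓝[≠] x) (𝓝 (c / 2)) := by
  have hf_cont : ContinuousAt f x := hf.self_of_nhds.continuousAt
  have ne_self : ∀ᶠ y in 𝓝[≠] x, y ≠ x := eventually_mem_nhdsWithin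
  refine HasDerivAt.lhopital_zero_nhdsNE (f' := f') (g' := fun y ↦ 2 * (y - x))
    (hf.filter_mono nhdsWithin_le_nhds |>.mono fun y hy ↦ hy.sub_const _)
    (.of_forall fun y ↦ ?_) ?_ ?_ ?_ ?_
  · simpa using! ((hasDerivAt_id y).sub_const x).pow 2
  · filter_upwards [ne_self] with y hy using mul_ne_zero two_ne_zero (sub_ne_zero.2 hy)
  · simpa using (hf_cont.tendsto.sub_const (f x)).mono_left nhdsWithin_le_nhds
  · have : Continuous fun y : ℝ ↦ (y - x) ^ 2 := by fun_prop
    simpa using (this.tendsto x).mono_left nhdsWithin_le_nhds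
  · refine (hf'.tendsto_slope.div_const 2).congr fun y ↦ ?_
    rw [slope_def_field, hx, sub_zero, div_div, mul_comm]

theorem tendsto_dilation_sub_div_sub_of_hasDerivAt {f f' : ℝ → ℝ} {x c : ℝ}
    (hf : ∀ᶠ y in 𝓝 x, HasDerivAt f (f' y) y) (hf' : HasDerivAt f' c x) (hx : f' x = 0)
    (hc : c ≠ 0) (s : ℝ) :
    Tendsto (fun y ↦ (f (x + s * (y - x)) - f x) / (f y - f x)) (𝓝[≠] x) (𝓝 (s ^ 2)) := by
  rcases eq_or_ne s 0 with rfl | hs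
  · simp
  have quadratic := tendsto_sub_div_sq_of_hasDerivAt hf hf' hx
  have dilation : Tendsto (fun y ↦ x + s * (y - x)) (𝓝[≠] x) (𝓝[≠] x) := by
    refine tendsto_nhdsWithin_of_tendsto_nhds_of_eventually_within _ ?_ ?_
    · have : Continuous fun y ↦ x + s * (y - x) := by fun_prop
      simpa using (this.tendsto x).mono_left nhdsWithin_le_nhds
    · filter_upwards [self_mem_nhdsWithin] with y hy
      simpa [hs, sub_eq_zero] using hy
  have ratio := ((quadratic.comp dilation).const_mul (s ^ 2)).div quadratic (by simpa using hc)
  rw [mul_div_cancel_right₀ _ (by simpa using hc)] at ratio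
  refine ratio.congr' ?_
  filter_upwards [self_mem_nhdsWithin] with y hy
  have hyx : y - x ≠ 0 := sub_ne_zero.2 hy
  simp only [Pi.div_apply, Function.comp_apply, add_sub_cancel_left]
  field_simp

theorem rpow_sub_rpow_le {α x y : ℝ} (hα : 1 ≤ α) (hx : 0 ≤ x) (hxy : x ≤ y) :
    y ^ α - x ^ α ≤ α * y ^ (α - 1) * (y - x) := by
  rcases hxy.eq_or_lt with rfl | hlt
  · simp
  have := (convexOn_rpow hα).slope_le_of_hasDerivAt hx (hx.trans hxy) hlt
    (Real.hasDerivAt_rpow_const (Or.inr hα))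
  rwa [slope_def_field, div_le_iff₀ (sub_pos.2 hlt)] at this

variable {α p : ℝ}

theorem bconv_eq (a b : ℝ) : bconv a b = 1 / 2 + (1 - 2 * a) * (b - 1 / 2) := by
  unfold bconv
  ring

theorem kA_eq_kH_rpow (α p : ℝ) : kA α p = kH α p ^ (1 / α) := rfl

theorem kH_pos (hp : p ∈ Icc (0 : ℝ) 1) : 0 < kH α p := by
  unfold kH
  rcases hp.1.eq_or_lt with rfl | hp0
  · rw [sub_zero, Real.one_rpow]
    linarith [Real.rpow_nonneg le_rfl α]
  · linarith [Real.rpow_pos_of_pos hp0 α, Real.rpow_nonneg (sub_nonneg.2 hp.2) α]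

theorem kH_half (α : ℝ) : kH α (1 / 2) = 2 ^ (1 - α) := by
  rw [kH, sub_half, one_div, Real.inv_rpow zero_le_two, Real.rpow_sub two_pos, Real.rpow_one]
  ring

theorem kA_zero (hα : α ≠ 0) : kA α 0 = 1 := by
  simp [kA, hα]

theorem kA_half (α : ℝ) : kA α (1 / 2) = deltaA α := by
  rw [kA_eq_kH_rpow, kH_half, ← Real.rpow_mul zero_le_two, mul_one_div, deltaA]

theorem deltaA_eq (hα : α ≠ 0) : deltaA α = 2 ^ (1 / α) / 2 := by
  rw [deltaA, sub_div, div_self hα, Real.rpow_sub two_pos, Real.rpow_one]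

theorem hasDerivAt_kH (hα : 1 ≤ α) (p : ℝ) :
    HasDerivAt (kH α) (α * (p ^ (α - 1) - (1 - p) ^ (α - 1))) p := by
  refine ((hasDerivAt_id p).rpow_const (Or.inr hα) |>.add
    (((hasDerivAt_id p).const_sub 1).rpow_const (Or.inr hα))).congr_deriv ?_
  simp only [id]
  ring

/-- The derivative of `k_α^A`, in closed form so that it can be differentiated again. -/
def kADeriv (α p : ℝ) : ℝ := (p ^ (α - 1) - (1 - p) ^ (α - 1)) * kH α p ^ (1 / α - 1)

theorem hasDerivAt_kA (hα : 1 ≤ α) (hp : p ∈ Icc (0 : ℝ) 1) :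
    HasDerivAt (kA α) (kADeriv α p) p := by
  refine ((hasDerivAt_kH hα p).rpow_const (Or.inl (kH_pos hp).ne')).congr_deriv ?_
  rw [kADeriv]
  field_simp

theorem kADeriv_zero (hα : 1 < α) : kADeriv α 0 = -1 := by
  simp [kADeriv, kH, sub_ne_zero.2 hα.ne', (one_pos.trans hα).ne']

theorem kADeriv_half (α : ℝ) : kADeriv α (1 / 2) = 0 := by
  rw [kADeriv, sub_half, sub_self, zero_mul]

theorem kADeriv_neg (hα : 1 < α) (hp : p ∈ Ioo (0 : ℝ) (1 / 2)) : kADeriv α p < 0 := by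
  obtain ⟨hp0, hp_half⟩ := hp
  refine mul_neg_of_neg_of_pos (sub_neg.2 ?_)
    (Real.rpow_pos_of_pos (kH_pos ⟨hp0.le, by linarith⟩) _)
  exact Real.rpow_lt_rpow hp0.le (by linarith) (by linarith)

theorem hasDerivAt_kADeriv_half (hα : 1 ≤ α) :
    HasDerivAt (kADeriv α) (2 * (2 ^ (1 / α) * (α - 1))) (1 / 2) := by
  have hkH := kH_pos (α := α) (p := 1 / 2) (by norm_num)
  have left : HasDerivAt (fun p : ℝ ↦ p ^ (α - 1)) _ (1 / 2) :=
    (hasDerivAt_id _).rpow_const (Or.inl (by norm_num))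
  have right : HasDerivAt (fun p : ℝ ↦ (1 - p) ^ (α - 1)) _ (1 / 2) :=
    ((hasDerivAt_id _).const_sub 1).rpow_const (Or.inl (by norm_num))
  have factor := (hasDerivAt_kH hα (1 / 2)).rpow_const (p := 1 / α - 1) (Or.inl hkH.ne')
  refine ((left.sub right).mul factor).congr_deriv ?_
  have two_power : (1 / 2 : ℝ) ^ (α - 1 - 1) * (2 ^ (1 - α)) ^ (1 / α - 1) = 2 ^ (1 / α) := by
    rw [one_div, Real.inv_rpow zero_le_two, ← Real.rpow_neg zero_le_two,
      ← Real.rpow_mul zero_le_two, ← Real.rpow_add two_pos]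
    congr 1
    field_simp
    ring
  simp only [id, Pi.sub_apply, sub_half, sub_self, zero_mul, mul_zero, add_zero, kH_half]
  rw [← two_power]
  ring

theorem eventually_hasDerivAt_kA (hα : 1 ≤ α) :
    ∀ᶠ p in 𝓝 (1 / 2), HasDerivAt (kA α) (kADeriv α p) p := by
  filter_upwards [Ioo_mem_nhds (by norm_num : (0 : ℝ) < 1 / 2) (by norm_num : (1 / 2 : ℝ) < 1)]
    with p hp using hasDerivAt_kA hα (Ioo_subset_Icc_self hp)

theorem strictAntiOn_kA (hα : 1 < α) : StrictAntiOn (kA α) (Icc 0 (1 / 2)) := by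
  have hderiv : ∀ p ∈ Icc (0 : ℝ) (1 / 2), HasDerivAt (kA α) (kADeriv α p) p :=
    fun p hp ↦ hasDerivAt_kA hα.le ⟨hp.1, hp.2.trans (by norm_num)⟩
  refine strictAntiOn_of_deriv_neg (convex_Icc _ _)
    (fun p hp ↦ (hderiv p hp).continuousAt.continuousWithinAt) fun p hp ↦ ?_
  rw [(hderiv p (interior_subset hp)).deriv]
  exact kADeriv_neg hα (by rwa [interior_Icc] at hp)

theorem kA_lt_one (hα : 1 < α) (hp : p ∈ Ioc (0 : ℝ) (1 / 2)) : kA α p < 1 := by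
  rw [← kA_zero (one_pos.trans hα).ne']
  exact strictAntiOn_kA hα (by norm_num) (Ioc_subset_Icc_self hp) hp.1

theorem deltaA_lt_kA (hα : 1 < α) (hp : p ∈ Ico (0 : ℝ) (1 / 2)) : deltaA α < kA α p := by
  rw [← kA_half]
  exact strictAntiOn_kA hα (Ico_subset_Icc_self hp) (by norm_num) hp.2

theorem kA_mem_IA (hα : 1 < α) (hp : p ∈ Icc (0 : ℝ) (1 / 2)) : kA α p ∈ IA α := by
  rw [IA, ← kA_zero (one_pos.trans hα).ne', ← kA_half, uIcc_comm]
  exact Icc_subset_uIcc ((strictAntiOn_kA hα).antitoneOn.mapsTo_Icc hp)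

theorem kAInv_kA (hα : 1 < α) (hp : p ∈ Icc (0 : ℝ) (1 / 2)) : kAInv α (kA α p) = p :=
  (strictAntiOn_kA hα).injOn.leftInvOn_invFunOn hp

/-- The squared bias `(1 - 2p)²` of the distribution `(p, 1 - p)` as a function of `x = k_α^A(p)`;
it is the limit of `(κ_α^A(x, y) - δ_α^A) / (y - δ_α^A)` as `y → δ_α^A`. -/
def biasSq (α x : ℝ) : ℝ := (1 - 2 * kAInv α x) ^ 2

theorem biasSq_kA (hα : 1 < α) (hp : p ∈ Icc (0 : ℝ) (1 / 2)) :
    biasSq α (kA α p) = (1 - 2 * p) ^ 2 := by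
  rw [biasSq, kAInv_kA hα hp]

theorem biasSq_one (hα : 1 < α) : biasSq α 1 = 1 := by
  rw [← kA_zero (one_pos.trans hα).ne', biasSq_kA hα (by norm_num), kA_zero (by positivity)]
  norm_num

theorem biasSq_deltaA (hα : 1 < α) : biasSq α (deltaA α) = 0 := by
  rw [← kA_half, biasSq_kA hα (by norm_num)]
  norm_num

theorem tendsto_kkA_sub_div_sub (hα : 1 < α) (x : ℝ) :
    Tendsto (fun b ↦ (kkA α x (kA α b) - deltaA α) / (kA α b - deltaA α)) (𝓝[<] (1 / 2))
      (𝓝 (biasSq α x)) := by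
  have hcurv : 2 * (2 ^ (1 / α) * (α - 1)) ≠ 0 := by
    have := sub_pos.2 hα
    positivity
  have ratio := tendsto_dilation_sub_div_sub_of_hasDerivAt (eventually_hasDerivAt_kA hα.le)
    (hasDerivAt_kADeriv_half hα.le) (kADeriv_half α) hcurv (1 - 2 * kAInv α x)
  refine (ratio.mono_left (nhdsLT_le_nhdsNE _)).congr' ?_
  filter_upwards [Ioo_mem_nhdsLT (by norm_num : (0 : ℝ) < 1 / 2)] with b hb
  rw [kkA, kAInv_kA hα (Ioo_subset_Icc_self hb), bconv_eq, kA_half]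

theorem convexOn_biasSq (hα : 1 < α)
    (H : ∀ y ∈ IA α, ConvexOn ℝ (IA α) fun x ↦ kkA α x y) : ConvexOn ℝ (IA α) (biasSq α) := by
  refine isClosed_setOfPred_convexOn.mem_of_tendsto
    (tendsto_pi_nhds.2 (tendsto_kkA_sub_div_sub hα)) ?_
  filter_upwards [Ioo_mem_nhdsLT (by norm_num : (0 : ℝ) < 1 / 2)] with b hb
  have hδ := sub_pos.2 (deltaA_lt_kA hα (Ioo_subset_Ico_self hb))
  have := ((H _ (kA_mem_IA hα (Ioo_subset_Icc_self hb))).add_const (-deltaA α)).smul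
    (inv_nonneg.2 hδ.le)
  simpa [div_eq_inv_mul, sub_eq_add_neg] using this

theorem concaveOn_biasSq (hα : 1 < α)
    (H : ∀ y ∈ IA α, ConcaveOn ℝ (IA α) fun x ↦ kkA α x y) : ConcaveOn ℝ (IA α) (biasSq α) := by
  refine isClosed_setOfPred_concaveOn.mem_of_tendsto
    (tendsto_pi_nhds.2 (tendsto_kkA_sub_div_sub hα)) ?_
  filter_upwards [Ioo_mem_nhdsLT (by norm_num : (0 : ℝ) < 1 / 2)] with b hb
  have hδ := sub_pos.2 (deltaA_lt_kA hα (Ioo_subset_Ico_self hb))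
  have := ((H _ (kA_mem_IA hα (Ioo_subset_Icc_self hb))).add_const (-deltaA α)).smul
    (inv_nonneg.2 hδ.le)
  simpa [div_eq_inv_mul, sub_eq_add_neg] using this

theorem tendsto_slope_biasSq_one (hα : 1 < α) :
    Tendsto (fun q ↦ slope (biasSq α) 1 (kA α q)) (𝓝[>] 0) (𝓝 4) := by
  have hkA := hasDerivAt_kA hα.le (p := 0) (by norm_num)
  rw [kADeriv_zero hα] at hkA
  have kA_slope := hkA.tendsto_slope.mono_left (nhdsGT_le_nhdsNE _)
  have numerator : Tendsto (fun q : ℝ ↦ 4 * q - 4) (𝓝[>] 0) (𝓝 (-4)) := by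
    have : Continuous fun q : ℝ ↦ 4 * q - 4 := by fun_prop
    simpa using (this.tendsto 0).mono_left nhdsWithin_le_nhds
  have ratio := numerator.div kA_slope (by norm_num)
  rw [show (-4 : ℝ) / -1 = 4 by norm_num] at ratio
  refine ratio.congr' ?_
  filter_upwards [Ioo_mem_nhdsGT (by norm_num : (0 : ℝ) < 1 / 2)] with q hq
  simp only [Pi.div_apply, slope_def_field]
  rw [biasSq_kA hα (Ioo_subset_Icc_self hq), biasSq_one hα,
    kA_zero (one_pos.trans hα).ne', sub_zero, div_div_eq_mul_div]
  ring

theorem kA_le_of_convexOn_biasSq (hα : 1 < α) (H : ConvexOn ℝ (IA α) (biasSq α))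
    (hp : p ∈ Ioc (0 : ℝ) (1 / 2)) : kA α p ≤ 1 - p + p ^ 2 := by
  have hp' := Ioc_subset_Icc_self hp
  have hkp := kA_lt_one hα hp
  have hslope : slope (biasSq α) 1 (kA α p) ≤ 4 := by
    refine ge_of_tendsto (tendsto_slope_biasSq_one hα) ?_
    filter_upwards [Ioo_mem_nhdsGT hp.1] with q hq
    have hq' : q ∈ Ioc (0 : ℝ) (1 / 2) := ⟨hq.1, hq.2.le.trans hp.2⟩
    exact H.slope_mono left_mem_uIcc ⟨kA_mem_IA hα hp', hkp.ne⟩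
      ⟨kA_mem_IA hα (Ioc_subset_Icc_self hq'), (kA_lt_one hα hq').ne⟩
      ((strictAntiOn_kA hα).antitoneOn (Ioc_subset_Icc_self hq') hp' hq.2.le)
  rw [slope_def_field, biasSq_kA hα hp', biasSq_one hα, div_le_iff_of_neg (sub_neg.2 hkp)] at hslope
  linarith

theorem kA_le_of_concaveOn_biasSq (hα : 1 < α) (H : ConcaveOn ℝ (IA α) (biasSq α))
    (hp : p ∈ Ioo (0 : ℝ) (1 / 2)) :
    kA α p ≤ deltaA α + (1 - deltaA α) * (1 - 2 * p) ^ 2 := by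
  have hp' := Ioo_subset_Icc_self hp
  have hkp := deltaA_lt_kA hα (Ioo_subset_Ico_self hp)
  have hkp1 := kA_lt_one hα (Ioo_subset_Ioc_self hp)
  have hslope : slope (biasSq α) (deltaA α) 1 ≤ slope (biasSq α) (deltaA α) (kA α p) :=
    H.slope_anti right_mem_uIcc ⟨kA_mem_IA hα hp', hkp.ne'⟩
      ⟨left_mem_uIcc, (hkp.trans hkp1).ne'⟩ hkp1.le
  rw [slope_def_field, slope_def_field, biasSq_kA hα hp', biasSq_one hα, biasSq_deltaA hα,
    div_le_div_iff₀ (by linarith) (by linarith)] at hslope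
  linarith

theorem one_sub_add_sq_lt_kA (hα : 1 ≤ α) (hp : p ∈ Icc (0 : ℝ) 1) (hlt : α * p ^ 2 < p ^ α) :
    1 - p + p ^ 2 < kA α p := by
  obtain ⟨hp0, hp1⟩ := hp
  have hy0 : 0 ≤ 1 - p + p ^ 2 := by nlinarith
  have hy1 : (1 - p + p ^ 2) ^ (α - 1) ≤ 1 :=
    Real.rpow_le_one hy0 (by nlinarith) (by linarith)
  have tangent := rpow_sub_rpow_le hα (sub_nonneg.2 hp1) (by nlinarith : 1 - p ≤ 1 - p + p ^ 2)
  have hpow : (1 - p + p ^ 2) ^ α < kH α p :=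
    calc (1 - p + p ^ 2) ^ α
        ≤ (1 - p) ^ α + α * p ^ 2 * (1 - p + p ^ 2) ^ (α - 1) := by linarith
      _ ≤ (1 - p) ^ α + α * p ^ 2 := by
          linarith [mul_le_of_le_one_right (by positivity : 0 ≤ α * p ^ 2) hy1]
      _ < kH α p := by rw [kH]; linarith
  rw [kA_eq_kH_rpow, one_div]
  exact (Real.lt_rpow_inv_iff_of_pos hy0 (kH_pos ⟨hp0, hp1⟩).le (by linarith)).2 hpow

theorem exists_one_sub_add_sq_lt_kA (hα : 1 < α) (hα2 : α < 2) :
    ∃ p ∈ Ioc (0 : ℝ) (1 / 2), 1 - p + p ^ 2 < kA α p := by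
  have hlim : Tendsto (fun p : ℝ ↦ α * p ^ (2 - α)) (𝓝[>] 0) (𝓝 0) := by
    have := (Real.continuousAt_rpow_const 0 (2 - α) (Or.inr (by linarith))).tendsto.const_mul α
    rw [Real.zero_rpow (by linarith), mul_zero] at this
    exact this.mono_left nhdsWithin_le_nhds
  obtain ⟨p, hsmall, hp⟩ := ((hlim.eventually_lt_const one_pos).and
    (Ioc_mem_nhdsGT (by norm_num : (0 : ℝ) < 1 / 2))).exists
  refine ⟨p, hp, one_sub_add_sq_lt_kA hα.le ⟨hp.1.le, hp.2.trans (by norm_num)⟩ ?_⟩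
  calc α * p ^ 2 = α * p ^ (2 - α) * p ^ α := by
        rw [mul_assoc, ← Real.rpow_add hp.1, sub_add_cancel, Real.rpow_two]
    _ < p ^ α := mul_lt_of_lt_one_left (Real.rpow_pos_of_pos hp.1 α) hsmall

theorem exists_deltaA_add_lt_kA (hα : 1 < α) (hcurv : 4 < 2 ^ (1 / α) * (α + 1)) :
    ∃ p ∈ Ioo (0 : ℝ) (1 / 2), deltaA α + (1 - deltaA α) * (1 - 2 * p) ^ 2 < kA α p := by
  have quadratic := (tendsto_sub_div_sq_of_hasDerivAt (eventually_hasDerivAt_kA hα.le)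
    (hasDerivAt_kADeriv_half hα.le) (kADeriv_half α)).mono_left (nhdsLT_le_nhdsNE _)
  have hlt : 4 * (1 - deltaA α) < 2 * (2 ^ (1 / α) * (α - 1)) / 2 := by
    rw [deltaA_eq (by linarith)]
    linarith
  obtain ⟨p, hp_lt, hp⟩ := ((quadratic.eventually_const_lt hlt).and
    (Ioo_mem_nhdsLT (by norm_num : (0 : ℝ) < 1 / 2))).exists
  refine ⟨p, hp, ?_⟩
  rw [kA_half, lt_div_iff₀ (sq_pos_of_neg (sub_neg.2 hp.2))] at hp_lt
  linarith

theorem four_lt_two_rpow_one_div_mul_add_one (hα : 1.58 < α) : 4 < 2 ^ (1 / α) * (α + 1) := by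
  have hα0 : 0 < α := by linarith
  -- the claim at `α = 1.58 = 79 / 50`, after taking logarithms and clearing denominators
  have at_endpoint : 108 * Real.log 2 < 79 * Real.log 2.58 := by
    have : Real.log ((2 : ℝ) ^ 108) < Real.log ((2.58 : ℝ) ^ 79) :=
      Real.log_lt_log (by norm_num) (by norm_num)
    rw [Real.log_pow, Real.log_pow] at this
    exact_mod_cast this
  have log_bound : Real.log 2.58 + (α - 1.58) / (α + 1) ≤ Real.log (α + 1) := by
    have := Real.one_sub_inv_le_log_of_pos (show 0 < (α + 1) / 2.58 by positivity)
    rw [Real.log_div (by positivity) (by norm_num), inv_div] at this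
    have : (α - 1.58) / (α + 1) = 1 - 2.58 / (α + 1) := by field_simp; ring
    linarith
  -- `0.612 < 1.58 / 2.58 ≤ α / (α + 1)`
  have linear_bound : 0.612 * (α - 1.58) ≤ α * ((α - 1.58) / (α + 1)) := by
    rw [mul_div_assoc', le_div_iff₀ (by positivity)]
    nlinarith
  have log_form : α * (2 * Real.log 2) < Real.log 2 + α * Real.log (α + 1) := by
    have := mul_le_mul_of_nonneg_left log_bound hα0.le
    nlinarith [Real.log_two_gt_d9, Real.log_two_lt_d9]
  rw [← Real.log_lt_log_iff (by norm_num) (by positivity),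
    Real.log_mul (by positivity) (by positivity), Real.log_rpow two_pos,
    show (4 : ℝ) = 2 ^ 2 by norm_num, Real.log_pow]
  refine lt_of_mul_lt_mul_left (a := α) ?_ hα0.le
  push_cast
  field_simp
  linarith

end

theorem stmt_4_general (α : ℝ) (hα : 1 < α) (hα2 : α < 2)
    (hcurv : 4 < (2 : ℝ) ^ (1 / α) * (α + 1)) :
    ¬ (∀ y ∈ IA α, ConvexOn ℝ (IA α) (fun x => kkA α x y)) ∧
    ¬ (∀ y ∈ IA α, ConcaveOn ℝ (IA α) (fun x => kkA α x y)) := by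
  refine ⟨fun H ↦ ?_, fun H ↦ ?_⟩
  · obtain ⟨p, hp, hlt⟩ := exists_one_sub_add_sq_lt_kA hα hα2
    exact (kA_le_of_convexOn_biasSq hα (convexOn_biasSq hα H) hp).not_gt hlt
  · obtain ⟨p, hp, hlt⟩ := exists_deltaA_add_lt_kA hα hcurv
    exact (kA_le_of_concaveOn_biasSq hα (concaveOn_biasSq hα H) hp).not_gt hlt

/-- For `α ∈ (1.58, 1.97)`, `κ_α^A` is neither convex nor concave
in its first argument uniformly over fixed second arguments. -/
theorem stmt_4 (α : ℝ) (h1 : (1.58 : ℝ) < α) (h2 : α < (1.97 : ℝ)) :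
    ¬ (∀ y ∈ IA α, ConvexOn ℝ (IA α) (fun x => kkA α x y)) ∧
    ¬ (∀ y ∈ IA α, ConcaveOn ℝ (IA α) (fun x => kkA α x y)) := by
  exact stmt_4_general α (by linarith) (by linarith)
    (four_lt_two_rpow_one_div_mul_add_one h1)
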